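/- (Local optimality implies determinant lower bound.) Let $A \in \mathbb{R}^{m \times n}$, let $\lambda_1 \ge \cdots \ge \lambda_m \ge 0$ be the eigenvalues of $AA^T$, let $1 \le k \le m$, let $\epsilon > 0$, and let $S \subseteq [m]$ with $|S| = k$ and $\det(A_S A_S^T) > 0$. Suppose for all $i \in S$ and $j \notin S$ that $\det(A_{(S \setminus \{i\}) \cup \{j\}} A_{(S \setminus \{i\}) \cup \{j\}}^T) \le (1 + \epsilon/k) \det(A_S A_S^T)$. Then $\left(1 + \frac{\epsilon}{k}\right)^{-k} \left(\frac{1}{m-k+1} \sum_{t=k}^{m} \lambda_t \right)^k \le \det(A_S A_S^T)$. -/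

import Mathlib

open scoped Matrix

/-- `det(A_S A_S^T)`, i.e. the determinant of the principal submatrix `(AA^T)_{S,S}`. -/
noncomputable def subDet {m n : ℕ} (A : Matrix (Fin m) (Fin n) ℝ) (S : Finset (Fin m)) : ℝ :=
  Matrix.det ((A * Aᵀ).submatrix (fun i : {x // x ∈ S} => i.1) (fun j : {x // x ∈ S} => j.1))

namespace Matrix

variable {ι : Type*} [DecidableEq ι]

/-- The elements of `insert j T`, split into those of `T` and the new element `j`. -/
def insertEquivSum {T : Finset ι} {j : ι} (hj : j ∉ T) :
    {x // x ∈ T} ⊕ Unit ≃ {x // x ∈ insert j T} :=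
  ((Finset.subtypeInsertEquivOption hj).trans (Equiv.optionEquivSumPUnit _)).symm

@[simp]
lemma insertEquivSum_inl {T : Finset ι} {j : ι} (hj : j ∉ T) (a : {x // x ∈ T}) :
    (insertEquivSum hj (Sum.inl a) : ι) = a := by
  simp [insertEquivSum, Finset.subtypeInsertEquivOption]

@[simp]
lemma insertEquivSum_inr {T : Finset ι} {j : ι} (hj : j ∉ T) (a : Unit) :
    insertEquivSum hj (Sum.inr a) = ⟨j, Finset.mem_insert_self j T⟩ := by
  simp [insertEquivSum, Finset.subtypeInsertEquivOption]

/-- The principal submatrix of `G` indexed by `T`. -/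
abbrev principal (G : Matrix ι ι ℝ) (T : Finset ι) : Matrix {x // x ∈ T} {x // x ∈ T} ℝ :=
  G.submatrix (fun i => i.1) (fun j => j.1)

/-- The residual of `G` after eliminating the rows and columns indexed by `T`; it extends the
Schur complement of `G.principal T` by zero. -/
noncomputable def residual (G : Matrix ι ι ℝ) (T : Finset ι) : Matrix ι ι ℝ :=
  G - G.submatrix id (fun i : {x // x ∈ T} => i.1) * (G.principal T)⁻¹ *
    G.submatrix (fun i : {x // x ∈ T} => i.1) id

lemma det_principal_insert (G : Matrix ι ι ℝ) {T : Finset ι} {j : ι} (hj : j ∉ T)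
    (hT : (G.principal T).det ≠ 0) :
    (G.principal (insert j T)).det = (G.principal T).det * G.residual T j j := by
  have hblocks : (G.principal (insert j T)).submatrix (insertEquivSum hj) (insertEquivSum hj) =
      fromBlocks (G.principal T) (G.submatrix (fun i => i.1) (fun _ : Unit => j))
        (G.submatrix (fun _ : Unit => j) (fun i => i.1))
        (G.submatrix (fun _ : Unit => j) (fun _ : Unit => j)) := by
    ext (a | a) (b | b) <;> simp [principal]
  let _ := invertibleOfIsUnitDet (G.principal T) hT.isUnit
  rw [← det_submatrix_equiv_self (insertEquivSum hj), hblocks, det_fromBlocks₁₁,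
    invOf_eq_nonsing_inv, det_unique (n := Unit)]
  rfl

lemma adjugate_principal_insert (G : Matrix ι ι ℝ) {T : Finset ι} {j : ι} (hj : j ∉ T) :
    (G.principal (insert j T)).adjugate ⟨j, Finset.mem_insert_self j T⟩
      ⟨j, Finset.mem_insert_self j T⟩ = (G.principal T).det := by
  have hblocks : ((G.principal (insert j T)).updateRow ⟨j, Finset.mem_insert_self j T⟩
        (Pi.single ⟨j, Finset.mem_insert_self j T⟩ 1)).submatrix
          (insertEquivSum hj) (insertEquivSum hj) =
      fromBlocks (G.principal T) (G.submatrix (fun i => i.1) (fun _ : Unit => j)) 0 1 := by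
    have hne (a : {x // x ∈ T}) :
        insertEquivSum hj (Sum.inl a) ≠ ⟨j, Finset.mem_insert_self j T⟩ := by
      intro h
      have := congrArg Subtype.val h
      rw [insertEquivSum_inl] at this
      exact hj ((show (a : ι) = j from this) ▸ a.2)
    ext (a | a) (b | b) <;> simp [principal, updateRow_apply, hne]
  rw [adjugate_apply, ← det_submatrix_equiv_self (insertEquivSum hj), hblocks,
    det_fromBlocks_zero₂₁, det_one, mul_one]

lemma adjugate_principal_apply_self (G : Matrix ι ι ℝ) {S : Finset ι} (i : {x // x ∈ S}) :
    (G.principal S).adjugate i i = (G.principal (S.erase i)).det := by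
  obtain ⟨i, hi⟩ := i
  obtain ⟨T, hT, rfl⟩ : ∃ T, i ∉ T ∧ insert i T = S :=
    ⟨S.erase i, Finset.notMem_erase i S, Finset.insert_erase hi⟩
  rw [adjugate_principal_insert G hT, Finset.erase_insert hT]

lemma residual_apply_mem (G : Matrix ι ι ℝ) {T : Finset ι} (hT : (G.principal T).det ≠ 0)
    {j : ι} (hj : j ∈ T) : G.residual T j j = 0 := by
  have h : (G.principal T - G.principal T * (G.principal T)⁻¹ * G.principal T)
      ⟨j, hj⟩ ⟨j, hj⟩ = 0 := by
    rw [mul_nonsing_inv _ hT.isUnit, one_mul, sub_self, zero_apply]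
  exact h

/-- A positive semidefinite matrix with diagonal bounded by `c` has determinant at most
`c ^ card`. -/
lemma PosSemidef.det_le_pow_of_diag_le {κ : Type*} [Fintype κ] [DecidableEq κ]
    {M : Matrix κ κ ℝ} (hM : M.PosSemidef) {c : ℝ} (hc : 0 < c) (h : ∀ i, M i i ≤ c) :
    M.det ≤ c ^ Fintype.card κ := by
  have hdet := hM.isHermitian.det_eq_prod_eigenvalues
  have htr := hM.isHermitian.trace_eq_sum_eigenvalues
  simp only [RCLike.ofReal_real_eq_id, id_eq] at hdet htr
  have hle : ∑ i, (hM.isHermitian.eigenvalues i / c - 1) ≤ 0 := by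
    rw [Finset.sum_sub_distrib, ← Finset.sum_div, ← htr, sub_nonpos, div_le_iff₀ hc, trace,
      Finset.sum_mul]
    exact Finset.sum_le_sum fun i _ => by simpa using h i
  calc M.det = ∏ i, hM.isHermitian.eigenvalues i := hdet
    _ ≤ ∏ i, c * Real.exp (hM.isHermitian.eigenvalues i / c - 1) := by
        refine Finset.prod_le_prod (fun i _ => hM.eigenvalues_nonneg i) fun i _ => ?_
        have := Real.add_one_le_exp (hM.isHermitian.eigenvalues i / c - 1)
        rw [sub_add_cancel, div_le_iff₀ hc] at this
        linarith
    _ = c ^ Fintype.card κ * Real.exp (∑ i, (hM.isHermitian.eigenvalues i / c - 1)) := by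
        rw [Finset.prod_mul_distrib, Real.exp_sum]; simp
    _ ≤ c ^ Fintype.card κ :=
        mul_le_of_le_one_right (by positivity) (Real.exp_le_one_iff.2 hle)

/-- The diagonal entries of a symmetric idempotent lie in `[0, 1]`. -/
lemma diag_mem_Icc_of_isIdempotentElem {κ : Type*} [Fintype κ] {P : Matrix κ κ ℝ}
    (hs : Pᵀ = P) (hi : P * P = P) (t : κ) : 0 ≤ P t t ∧ P t t ≤ 1 := by
  have hsq : P t t = ∑ s, P t s ^ 2 := by
    conv_lhs => rw [← hi]
    rw [mul_apply]
    refine Finset.sum_congr rfl fun s _ => ?_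
    rw [sq, ← congrFun (congrFun hs t) s, transpose_apply]
  have hle : P t t ^ 2 ≤ P t t := by
    conv_rhs => rw [hsq]
    exact Finset.single_le_sum (f := fun s => P t s ^ 2) (fun s _ => sq_nonneg _)
      (Finset.mem_univ t)
  constructor <;> nlinarith [sq_nonneg (P t t)]

end Matrix

/-- A fractional choice of total weight `r` picks up at most the `r` largest values. -/
lemma sum_tail_le_sum_one_sub_mul {m : ℕ} {lam : Fin m → ℝ} (hmono : Antitone lam)
    {q : Fin m → ℝ} (hq : ∀ t, 0 ≤ q t ∧ q t ≤ 1) {r : ℕ} (hr : r < m)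
    (hsum : ∑ t, q t = r) :
    ∑ t ∈ Finset.univ.filter (fun t : Fin m => r ≤ (t : ℕ)), lam t ≤
      ∑ t, (1 - q t) * lam t := by
  have hcard : ∑ t : Fin m, (if r ≤ (t : ℕ) then (1 : ℝ) else 0) = m - r := by
    rw [Finset.sum_boole]
    have : (Finset.univ.filter (fun t : Fin m => r ≤ (t : ℕ))) = Finset.Ici ⟨r, hr⟩ := by
      ext t; simp [Fin.le_def]
    rw [this, Fin.card_Ici, Nat.cast_sub hr.le]
  have hbal : ∑ t, (1 - q t - if r ≤ (t : ℕ) then (1 : ℝ) else 0) * lam ⟨r, hr⟩ = 0 := by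
    rw [← Finset.sum_mul, Finset.sum_sub_distrib, Finset.sum_sub_distrib, hcard, hsum]
    simp
  have hterm : ∑ t, (1 - q t - if r ≤ (t : ℕ) then (1 : ℝ) else 0) * lam ⟨r, hr⟩ ≤
      ∑ t, (1 - q t - if r ≤ (t : ℕ) then (1 : ℝ) else 0) * lam t := by
    refine Finset.sum_le_sum fun t _ => ?_
    split_ifs with h
    · have := hmono (show (⟨r, hr⟩ : Fin m) ≤ t from h)
      nlinarith [(hq t).1]
    · have := hmono (show t ≤ (⟨r, hr⟩ : Fin m) from (not_le.1 h).le)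
      nlinarith [(hq t).2]
  rw [Finset.sum_filter]
  have hsplit : ∑ t, (1 - q t - if r ≤ (t : ℕ) then (1 : ℝ) else 0) * lam t =
      ∑ t, (1 - q t) * lam t - ∑ t : Fin m, if r ≤ (t : ℕ) then lam t else 0 := by
    rw [← Finset.sum_sub_distrib]
    refine Finset.sum_congr rfl fun t _ => ?_
    split_ifs <;> ring
  linarith

namespace Matrix

/-- A real symmetric matrix whose eigenvalues, in some order, are the nonnegative numbers `lam`
factors as `V * Vᵀ` with `Vᵀ * V` diagonal. -/
lemma IsHermitian.exists_orthogonal_factor {ι : Type*} [Fintype ι] [DecidableEq ι]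
    {G : Matrix ι ι ℝ} (hG : G.IsHermitian) {lam : ι → ℝ} (hnn : ∀ t, 0 ≤ lam t)
    (σ : Equiv.Perm ι) (hσ : ∀ t, lam t = hG.eigenvalues (σ t)) :
    ∃ V : Matrix ι ι ℝ, V * Vᵀ = G ∧ Vᵀ * V = diagonal lam := by
  set U : Matrix ι ι ℝ := hG.eigenvectorUnitary.1
  have hUU : Uᵀ * U = 1 := by
    simpa [star_eq_conjTranspose] using Unitary.coe_star_mul_self hG.eigenvectorUnitary
  have hspec : G = U * diagonal hG.eigenvalues * Uᵀ := by
    conv_lhs => rw [hG.spectral_theorem]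
    rfl
  set D : Matrix ι ι ℝ := diagonal fun t => √(lam t)
  have hDD : D * D = diagonal lam := by
    rw [diagonal_mul_diagonal]
    congr 1; ext t; exact Real.mul_self_sqrt (hnn t)
  have hDT : Dᵀ = D := diagonal_transpose _
  refine ⟨U.submatrix id σ * D, ?_, ?_⟩
  · have hl : diagonal lam = (diagonal hG.eigenvalues).submatrix σ σ := by
      rw [submatrix_diagonal_equiv]; congr 1; ext t; exact hσ t
    rw [transpose_mul, hDT, transpose_submatrix, Matrix.mul_assoc, ← Matrix.mul_assoc D, hDD, hl,
      submatrix_mul_equiv, submatrix_mul_equiv, submatrix_id_id, ← Matrix.mul_assoc, ← hspec]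
  · have : (U.submatrix id σ)ᵀ * U.submatrix id σ = 1 := by
      rw [transpose_submatrix, submatrix_mul _ _ _ _ _ Function.bijective_id |>.symm, hUU,
        submatrix_one_equiv]
    rw [transpose_mul, hDT, Matrix.mul_assoc, ← Matrix.mul_assoc _ _ D, this, Matrix.one_mul, hDD]

/-- Eliminating `T` from a positive semidefinite matrix leaves a residual whose trace is at least
the sum of all but the `T.card` largest eigenvalues. -/
lemma sum_tail_le_trace_residual {m : ℕ} {G V : Matrix (Fin m) (Fin m) ℝ} {lam : Fin m → ℝ}
    (hmono : Antitone lam) (hV : V * Vᵀ = G) (hV' : Vᵀ * V = diagonal lam)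
    {T : Finset (Fin m)} (hcard : T.card < m) (hT : (G.principal T).det ≠ 0) :
    ∑ t ∈ Finset.univ.filter (fun t : Fin m => T.card ≤ (t : ℕ)), lam t ≤
      (G.residual T).trace := by
  set W : Matrix {x // x ∈ T} (Fin m) ℝ := V.submatrix (fun i => i.1) id
  have hWW : W * Wᵀ = G.principal T := by rw [← hV]; rfl
  have hVW : V * Wᵀ = G.submatrix id (fun i : {x // x ∈ T} => i.1) := by rw [← hV]; rfl
  have hWV : W * Vᵀ = G.submatrix (fun i : {x // x ∈ T} => i.1) id := by rw [← hV]; rfl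
  set M := G.principal T
  have hMT : Mᵀ = M := by rw [← hWW, transpose_mul, transpose_transpose]
  set P : Matrix (Fin m) (Fin m) ℝ := Wᵀ * M⁻¹ * W with hP
  have hs : Pᵀ = P := by
    rw [hP, transpose_mul, transpose_mul, transpose_transpose, transpose_nonsing_inv, hMT,
      Matrix.mul_assoc]
  have hi : P * P = P := by
    calc P * P = Wᵀ * M⁻¹ * (W * Wᵀ) * M⁻¹ * W := by simp only [hP, Matrix.mul_assoc]
      _ = P := by rw [hWW, nonsing_inv_mul_cancel_right _ _ hT.isUnit]
  have htr : ∑ t, P t t = (T.card : ℝ) := by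
    change P.trace = _
    rw [hP, Matrix.mul_assoc, trace_mul_comm, Matrix.mul_assoc, hWW,
      nonsing_inv_mul _ hT.isUnit, trace_one, Fintype.card_coe]
  have hres : (G.residual T).trace = ∑ t, (1 - P t t) * lam t := by
    have h1 : G.residual T = V * (1 - P) * Vᵀ := by
      rw [residual, ← hVW, ← hWV, Matrix.mul_sub, Matrix.sub_mul, Matrix.mul_one, hV, hP]
      simp only [Matrix.mul_assoc]
      rfl
    rw [h1, Matrix.mul_assoc, trace_mul_comm, Matrix.mul_assoc, hV', trace]
    simp [mul_diagonal]
  rw [hres]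
  exact sum_tail_le_sum_one_sub_mul hmono (diag_mem_Icc_of_isIdempotentElem hs hi) hcard htr

end Matrix

open Matrix in
/-- Under approximate local optimality, deleting one element from `S` changes the determinant by
a factor controlled by the tail of the spectrum. -/
lemma sum_tail_mul_det_erase_le {m : ℕ} {G V : Matrix (Fin m) (Fin m) ℝ} {lam : Fin m → ℝ}
    (hmono : Antitone lam) (hV : V * Vᵀ = G) (hV' : Vᵀ * V = diagonal lam)
    {S : Finset (Fin m)} {i : Fin m} (hi : i ∈ S) (hT : 0 < (G.principal (S.erase i)).det) {b : ℝ}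
    (hb : ∀ j ∉ S.erase i, (G.principal (insert j (S.erase i))).det ≤ b) :
    (∑ t ∈ Finset.univ.filter (fun t : Fin m => S.card ≤ (t : ℕ) + 1), lam t) *
      (G.principal (S.erase i)).det ≤ ((m - S.card + 1 : ℕ) : ℝ) * b := by
  set T := S.erase i
  have hcard : T.card + 1 = S.card := Finset.card_erase_add_one hi
  have hSm : S.card ≤ m := by simpa using S.card_le_univ
  have htail := sum_tail_le_trace_residual hmono hV hV' (T := T) (by omega) hT.ne'
  have hfilter : Finset.univ.filter (fun t : Fin m => S.card ≤ (t : ℕ) + 1) =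
      Finset.univ.filter (fun t : Fin m => T.card ≤ (t : ℕ)) := by
    ext t; simp [← hcard]
  have htrace : (G.residual T).trace = ∑ j ∈ Tᶜ, G.residual T j j := by
    rw [trace, ← Finset.sum_add_sum_compl T]
    simp only [diag_apply]
    rw [Finset.sum_eq_zero fun j hj => residual_apply_mem G hT.ne' hj, zero_add]
  calc _ ≤ (G.residual T).trace * (G.principal T).det := by
        rw [hfilter]; exact mul_le_mul_of_nonneg_right htail hT.le
    _ = ∑ j ∈ Tᶜ, (G.principal (insert j T)).det := by
        rw [htrace, Finset.sum_mul]
        refine Finset.sum_congr rfl fun j hj => ?_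
        rw [det_principal_insert G (Finset.mem_compl.1 hj) hT.ne', mul_comm]
    _ ≤ Tᶜ.card • b := Finset.sum_le_card_nsmul _ _ _ fun j hj => hb j (Finset.mem_compl.1 hj)
    _ = ((m - S.card + 1 : ℕ) : ℝ) * b := by
        rw [nsmul_eq_mul, Finset.card_compl, Fintype.card_fin]
        congr 2; omega

/-- local optimality implies determinant lower bound: let `λ₁ ≥ ⋯ ≥ λ_m ≥ 0`
be the eigenvalues of `AA^T` (here `lam`, an antitone enumeration of the eigenvalues),
`1 ≤ k ≤ m`, `ε > 0`, and `S` with `|S| = k`, `det(A_S A_S^T) > 0`. If every single-element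
swap improves the determinant by at most a `(1 + ε/k)` factor, then
`(1 + ε/k)⁻ᵏ ((1/(m-k+1)) ∑_{t=k}^m λ_t)ᵏ ≤ det(A_S A_S^T)`. -/
theorem statement14 {m n : ℕ} (A : Matrix (Fin m) (Fin n) ℝ)
    (hH : (A * Aᵀ).IsHermitian)
    (lam : Fin m → ℝ) (hmono : Antitone lam) (hnn : ∀ t, 0 ≤ lam t)
    (hperm : ∃ σ : Equiv.Perm (Fin m), ∀ t, lam t = hH.eigenvalues (σ t))
    (k : ℕ) (hk1 : 1 ≤ k) (hk2 : k ≤ m) (ε : ℝ) (hε : 0 < ε)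
    (S : Finset (Fin m)) (hS : S.card = k) (hpos : 0 < subDet A S)
    (hloc : ∀ i ∈ S, ∀ j ∉ S,
      subDet A (insert j (S.erase i)) ≤ (1 + ε / k) * subDet A S) :
    ((1 + ε / k) ^ k)⁻¹ *
        ((∑ t ∈ Finset.univ.filter (fun t : Fin m => k ≤ (t : ℕ) + 1), lam t)
          / ((m - k + 1 : ℕ) : ℝ)) ^ k
      ≤ subDet A S := by
  subst hS
  obtain ⟨σ, hσ⟩ := hperm
  obtain ⟨V, hV, hV'⟩ := hH.exists_orthogonal_factor hnn σ hσ
  set G := A * Aᵀ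
  change 0 < (G.principal S).det at hpos
  change ∀ i ∈ S, ∀ j ∉ S, (G.principal (insert j (S.erase i))).det ≤
    (1 + ε / S.card) * (G.principal S).det at hloc
  change _ ≤ (G.principal S).det
  have hGpsd : G.PosSemidef := by
    simpa using Matrix.posSemidef_self_mul_conjTranspose A
  have hSpd : (G.principal S).PosDef :=
    (hGpsd.submatrix _).posDef_iff_det_ne_zero.2 hpos.ne'
  have hδ : 1 ≤ 1 + ε / S.card := le_add_of_nonneg_right (by positivity)
  set δ := 1 + ε / S.card
  have hδ0 : 0 < δ := one_pos.trans_le hδ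
  set τ := (∑ t ∈ Finset.univ.filter (fun t : Fin m => S.card ≤ (t : ℕ) + 1), lam t) /
    ((m - S.card + 1 : ℕ) : ℝ) with hτ
  have hτ0 : 0 ≤ τ := div_nonneg (Finset.sum_nonneg fun t _ => hnn t) (Nat.cast_nonneg _)
  rcases hτ0.eq_or_lt with h0 | hτpos
  · rw [← h0, zero_pow (by omega), mul_zero]
    exact hpos.le
  have hentry (i : {x // x ∈ S}) : (G.principal S)⁻¹ i i ≤ δ / τ := by
    have hT : 0 < (G.principal (S.erase i)).det :=
      (hSpd.submatrix (e := fun x : {x // x ∈ S.erase i} => ⟨x.1, Finset.mem_of_mem_erase x.2⟩)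
        fun x y h => Subtype.ext (congrArg (fun z : {x // x ∈ S} => z.1) h)).det_pos
    have hswap := sum_tail_mul_det_erase_le hmono hV hV' i.2 hT (b := δ * (G.principal S).det)
      fun j hj => by
        by_cases hjS : j ∈ S
        · obtain rfl : j = i := by
            by_contra hne
            exact hj (Finset.mem_erase.2 ⟨hne, hjS⟩)
          rw [Finset.insert_erase hjS]
          exact le_mul_of_one_le_left hpos.le hδ
        · exact hloc i i.2 j hjS
    rw [Matrix.inv_def, Ring.inverse_eq_inv', Matrix.smul_apply,
      Matrix.adjugate_principal_apply_self, smul_eq_mul, inv_mul_eq_div,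
      div_le_div_iff₀ hpos hτpos, hτ, mul_div_assoc', div_le_iff₀ (by positivity)]
    linarith
  have hdet := hSpd.inv.posSemidef.det_le_pow_of_diag_le (div_pos hδ0 hτpos) hentry
  rw [Matrix.det_nonsing_inv, Ring.inverse_eq_inv', Fintype.card_coe,
    inv_le_comm₀ hpos (by positivity), div_pow, inv_div] at hdet
  rwa [inv_mul_eq_div]
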